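/- For every s ∈ [0,T] and all Ê-integrable X, X′: |L^1_s(X) − L^2_s(X′)| ≤ (2c̄/c̲) Ê[|X − X′|] + (1/c̲) ( |H̄^1(s, L^1_s(X′), X′) − H̄^2(s, L^1_s(X′), X′)| + |l^1_s − l^2_s| ), and analogously |U^1_s(X) − U^2_s(X′)| ≤ (2c̄/c̲) Ê[|X − X′|] + (1/c̲) ( |H̄^1(s, U^1_s(X′), X′) − H̄^2(s, U^1_s(X′), X′)| + |u^1_s − u^2_s| ). -/

import Mathlib

open MeasureTheory Set Filter

/-- The sublinear expectation `Ê[X] = sup_{P ∈ Ps} ∫ X dP`. -/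
noncomputable def sublinE {Ω : Type*} [MeasurableSpace Ω] (Ps : Set (Measure Ω)) (X : Ω → ℝ) : ℝ :=
  sSup ((fun P => ∫ ω, X ω ∂P) '' Ps)

/-- `X` is Ê-integrable: measurable, integrable w.r.t. each `P ∈ Ps`, and
`sup_{P ∈ Ps} ∫ |X| dP < ∞`. -/
def EIntegrable {Ω : Type*} [MeasurableSpace Ω] (Ps : Set (Measure Ω)) (X : Ω → ℝ) : Prop :=
  Measurable X ∧ (∀ P ∈ Ps, Integrable X P) ∧ ∃ M : ℝ, ∀ P ∈ Ps, (∫ ω, |X ω| ∂P) ≤ M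

/-- Assumption (H_r) on the barriers `l, u` and the running loss function `hb`,
with constants `0 < cl ≤ cu` and `Ch > 0`. -/
def HrAssumption {Ω : Type*} [MeasurableSpace Ω] (T cl cu Ch : ℝ)
    (l u : ℝ → ℝ) (hb : ℝ → Ω → ℝ → ℝ) : Prop :=
  0 < cl ∧ cl ≤ cu ∧ 0 < Ch ∧
  ContinuousOn l (Icc 0 T) ∧ ContinuousOn u (Icc 0 T) ∧
  (∃ M : ℝ, ∀ t ∈ Icc (0:ℝ) T, |l t| ≤ M ∧ |u t| ≤ M) ∧
  (∃ ε > 0, ∀ t ∈ Icc (0:ℝ) T, ε ≤ u t - l t) ∧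
  (∀ t y, Measurable fun ω => hb t ω y) ∧
  (∀ ε > 0, ∃ δ > 0, ∀ (ω : Ω) (t t' y y' : ℝ),
      |t - t'| + |y - y'| < δ → |hb t ω y - hb t' ω y'| < ε) ∧
  (∀ t ω, StrictMono (hb t ω)) ∧
  (∀ t ω y, |hb t ω y| ≤ Ch * (1 + |y|)) ∧
  (∀ t ω y y', cl * |y - y'| ≤ |hb t ω y - hb t ω y'| ∧
    |hb t ω y - hb t ω y'| ≤ cu * |y - y'|)

/-- `H̄(t, x, X) = Ê[hb(t, x + X − Ê[X])]`. -/
noncomputable def Hbar {Ω : Type*} [MeasurableSpace Ω] (Ps : Set (Measure Ω))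
    (hb : ℝ → Ω → ℝ → ℝ) (t x : ℝ) (X : Ω → ℝ) : ℝ :=
  sublinE Ps (fun ω => hb t ω (x + X ω - sublinE Ps X))

/-- A family `(S_t)_{t ∈ [0,T]}` of Ê-integrable random variables which is continuous in mean. -/
def MeanContinuous {Ω : Type*} [MeasurableSpace Ω] (Ps : Set (Measure Ω)) (T : ℝ)
    (S : ℝ → Ω → ℝ) : Prop :=
  (∀ t ∈ Icc (0:ℝ) T, EIntegrable Ps (S t)) ∧
  ∀ t ∈ Icc (0:ℝ) T,
    Tendsto (fun s => sublinE Ps fun ω => |S s ω - S t ω|) (nhdsWithin t (Icc 0 T)) (nhds 0)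

/-- The minimality (Skorokhod) condition in its equivalent increment form: `R` may only
increase on intervals where `φ` stays strictly below `u` and may only decrease on intervals
where `φ` stays strictly above `l`. -/
def MinimalityIncr (T : ℝ) (φ l u R : ℝ → ℝ) : Prop :=
  ∀ s t : ℝ, 0 ≤ s → s < t → t ≤ T →
    ((∀ v, s < v → v ≤ t → φ v < u v) → R s ≤ R t) ∧
    ((∀ v, s < v → v ≤ t → l v < φ v) → R t ≤ R s)

/-- `(Y, R)` solves the backward Skorokhod problem with sublinear expectation for the data
`(Ybar, hb, l, u)`. -/
def IsBSPsol {Ω : Type*} [MeasurableSpace Ω] (Ps : Set (Measure Ω)) (T : ℝ)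
    (hb : ℝ → Ω → ℝ → ℝ) (l u : ℝ → ℝ) (Ybar Y : ℝ → Ω → ℝ) (R : ℝ → ℝ) : Prop :=
  (∀ t ∈ Icc (0:ℝ) T, ∀ ω, Y t ω = Ybar t ω + R T - R t) ∧
  (∀ t ∈ Icc (0:ℝ) T, l t ≤ sublinE Ps (fun ω => hb t ω (Y t ω)) ∧
    sublinE Ps (fun ω => hb t ω (Y t ω)) ≤ u t) ∧
  ContinuousOn R (Icc 0 T) ∧ BoundedVariationOn R (Icc 0 T) ∧ R 0 = 0 ∧
  MinimalityIncr T (fun v => sublinE Ps (fun ω => hb v ω (Y v ω))) l u R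

/-!
The loss `H̄` inherits two properties of `y ↦ ħ(t, ω, y)`, uniformly in `ω`. If `ħ` is
`C`-Lipschitz, then `|H̄(t, x, X) - H̄(t, x, X')| ≤ 2 C Ê[|X - X'|]`: one `Ê[|X - X'|]` comes from
moving `X`, the other from moving the centring `Ê[X]`. If `y ↦ ħ(t, ω, y) - c y` is increasing,
then so is `x ↦ H̄(t, x, X) - c x`, since `Ê` is monotone and commutes with adding constants.
The second property turns differences of values of `H̄` into differences of roots. With
`x = L¹(X)`, `x' = L¹(X')` and `y = L²(X')`, the estimate follows from
`|x - y| ≤ |x - x'| + |x' - y|`, because `H̄¹(x, X) = H̄¹(x', X')` and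
`H̄²(x', X') - H̄²(y, X') = (H̄² - H̄¹)(x', X') + (l¹ - l²)`.
-/

section

open scoped NNReal

theorem mul_abs_sub_le_abs_sub_of_monotone {R : Type*} [CommRing R] [LinearOrder R]
    [IsStrictOrderedRing R] {f : R → R} {c : R} (hf : Monotone fun x => f x - c * x) (x y : R) :
    c * |x - y| ≤ |f x - f y| := by
  wlog hxy : y ≤ x generalizing x y
  · rw [abs_sub_comm x, abs_sub_comm (f x)]
    exact this y x (le_of_not_ge hxy)
  have hinc : f y - c * y ≤ f x - c * x := hf hxy
  calc c * |x - y| = c * x - c * y := by rw [abs_of_nonneg (sub_nonneg.2 hxy), mul_sub]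
    _ ≤ f x - f y := by linarith
    _ ≤ |f x - f y| := le_abs_self _

variable {Ω : Type*} [MeasurableSpace Ω] {Ps : Set (Measure Ω)} {X Y : Ω → ℝ}

namespace EIntegrable

theorem mono (hY : EIntegrable Ps Y) (hX : Measurable X) (hXY : ∀ ω, |X ω| ≤ |Y ω|) :
    EIntegrable Ps X := by
  obtain ⟨-, hYint, M, hM⟩ := hY
  have hXint : ∀ P ∈ Ps, Integrable X P := fun P hP =>
    (hYint P hP).mono hX.aestronglyMeasurable (Eventually.of_forall hXY)
  exact ⟨hX, hXint, M, fun P hP =>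
    (integral_mono (hXint P hP).abs (hYint P hP).abs hXY).trans (hM P hP)⟩

theorem const (hprob : ∀ P ∈ Ps, IsProbabilityMeasure P) (a : ℝ) :
    EIntegrable Ps fun _ => a := by
  refine ⟨measurable_const, fun P hP => ?_, |a|, fun P hP => ?_⟩ <;> have := hprob P hP
  · exact integrable_const a
  · simp

theorem abs (hX : EIntegrable Ps X) : EIntegrable Ps fun ω => |X ω| :=
  hX.mono hX.1.abs fun ω => (abs_abs (X ω)).le

theorem neg (hX : EIntegrable Ps X) : EIntegrable Ps fun ω => -X ω :=
  hX.mono hX.1.neg fun ω => (abs_neg (X ω)).le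

theorem add (hX : EIntegrable Ps X) (hY : EIntegrable Ps Y) :
    EIntegrable Ps fun ω => X ω + Y ω := by
  obtain ⟨hXmeas, hXint, M, hM⟩ := hX
  obtain ⟨hYmeas, hYint, N, hN⟩ := hY
  refine ⟨hXmeas.add hYmeas, fun P hP => (hXint P hP).add (hYint P hP), M + N, fun P hP => ?_⟩
  calc ∫ ω, |X ω + Y ω| ∂P ≤ ∫ ω, (|X ω| + |Y ω|) ∂P :=
        integral_mono ((hXint P hP).add (hYint P hP)).abs
          ((hXint P hP).abs.add (hYint P hP).abs) fun ω => abs_add_le (X ω) (Y ω)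
    _ = ∫ ω, |X ω| ∂P + ∫ ω, |Y ω| ∂P := integral_add (hXint P hP).abs (hYint P hP).abs
    _ ≤ M + N := add_le_add (hM P hP) (hN P hP)

theorem sub (hX : EIntegrable Ps X) (hY : EIntegrable Ps Y) :
    EIntegrable Ps fun ω => X ω - Y ω := by
  simpa only [sub_eq_add_neg] using hX.add hY.neg

theorem const_mul (hX : EIntegrable Ps X) (a : ℝ) : EIntegrable Ps fun ω => a * X ω := by
  obtain ⟨hmeas, hint, M, hM⟩ := hX
  refine ⟨hmeas.const_mul a, fun P hP => (hint P hP).const_mul a, |a| * M, fun P hP => ?_⟩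
  simp only [abs_mul, integral_const_mul]
  exact mul_le_mul_of_nonneg_left (hM P hP) (abs_nonneg a)

theorem bddAbove (hX : EIntegrable Ps X) : BddAbove (range fun P : Ps => ∫ ω, X ω ∂P.1) := by
  obtain ⟨-, hint, M, hM⟩ := hX
  refine ⟨M, forall_mem_range.2 fun P => ?_⟩
  exact (integral_mono (hint P P.2) (hint P P.2).abs fun ω => le_abs_self (X ω)).trans (hM P P.2)

end EIntegrable

theorem sublinE_eq_iSup (X : Ω → ℝ) : sublinE Ps X = ⨆ P : Ps, ∫ ω, X ω ∂P.1 :=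
  sSup_image'

theorem sublinE_mono (hX : EIntegrable Ps X) (hY : EIntegrable Ps Y) (hXY : ∀ ω, X ω ≤ Y ω) :
    sublinE Ps X ≤ sublinE Ps Y := by
  simp only [sublinE_eq_iSup]
  exact ciSup_mono hY.bddAbove fun P => integral_mono (hX.2.1 P P.2) (hY.2.1 P P.2) hXY

theorem sublinE_add_le (hPs : Ps.Nonempty) (hX : EIntegrable Ps X) (hY : EIntegrable Ps Y) :
    sublinE Ps (fun ω => X ω + Y ω) ≤ sublinE Ps X + sublinE Ps Y := by
  have := hPs.to_subtype
  simp only [sublinE_eq_iSup]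
  refine ciSup_le fun P => ?_
  rw [integral_add (hX.2.1 P P.2) (hY.2.1 P P.2)]
  exact add_le_add (le_ciSup hX.bddAbove P) (le_ciSup hY.bddAbove P)

theorem sublinE_const_mul {a : ℝ} (ha : 0 ≤ a) (X : Ω → ℝ) :
    sublinE Ps (fun ω => a * X ω) = a * sublinE Ps X := by
  simp only [sublinE_eq_iSup, integral_const_mul, Real.mul_iSup_of_nonneg ha]

theorem sublinE_add_const (hPs : Ps.Nonempty) (hprob : ∀ P ∈ Ps, IsProbabilityMeasure P)
    (hX : EIntegrable Ps X) (a : ℝ) :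
    sublinE Ps (fun ω => X ω + a) = sublinE Ps X + a := by
  have := hPs.to_subtype
  simp only [sublinE_eq_iSup, ciSup_add hX.bddAbove]
  congr with P
  have := hprob P P.2
  simp [integral_add (hX.2.1 P P.2) (integrable_const a)]

theorem abs_sublinE_sub_sublinE_le (hPs : Ps.Nonempty) (hX : EIntegrable Ps X)
    (hY : EIntegrable Ps Y) :
    |sublinE Ps X - sublinE Ps Y| ≤ sublinE Ps fun ω => |X ω - Y ω| := by
  have hle {Z W : Ω → ℝ} (hZ : EIntegrable Ps Z) (hW : EIntegrable Ps W) :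
      sublinE Ps Z - sublinE Ps W ≤ sublinE Ps fun ω => |Z ω - W ω| := by
    have hdiff := (hZ.sub hW).abs
    rw [sub_le_iff_le_add']
    calc sublinE Ps Z ≤ sublinE Ps (fun ω => W ω + |Z ω - W ω|) :=
          sublinE_mono hZ (hW.add hdiff) fun ω => sub_le_iff_le_add'.1 (le_abs_self _)
      _ ≤ sublinE Ps W + sublinE Ps fun ω => |Z ω - W ω| := sublinE_add_le hPs hW hdiff
  refine abs_sub_le_iff.2 ⟨hle hX hY, ?_⟩
  simpa only [abs_sub_comm] using hle hY hX

/-- A random loss function `h ω y` at a fixed time: measurable in `ω`, `K`-Lipschitz in `y`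
uniformly in `ω`, and Ê-integrable at `y = 0`. This is what makes `h ω (Y ω)` Ê-integrable for
every Ê-integrable `Y`. -/
structure IsLipschitzLoss (Ps : Set (Measure Ω)) (K : ℝ≥0) (h : Ω → ℝ → ℝ) : Prop where
  measurable (y : ℝ) : Measurable fun ω => h ω y
  lipschitzWith (ω : Ω) : LipschitzWith K (h ω)
  eIntegrable_zero : EIntegrable Ps fun ω => h ω 0

namespace IsLipschitzLoss

variable {K : ℝ≥0} {h : Ω → ℝ → ℝ}

theorem abs_sub_le (hh : IsLipschitzLoss Ps K h) (ω : Ω) (y z : ℝ) :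
    |h ω y - h ω z| ≤ K * |y - z| := by
  simpa only [Real.dist_eq] using (hh.lipschitzWith ω).dist_le_mul y z

theorem eIntegrable_comp (hh : IsLipschitzLoss Ps K h) (hY : EIntegrable Ps Y) :
    EIntegrable Ps fun ω => h ω (Y ω) := by
  have hmeas : Measurable fun p : ℝ × Ω => h p.2 p.1 :=
    measurable_uncurry_of_continuous_of_measurable (u := fun y ω => h ω y)
      (fun ω => (hh.lipschitzWith ω).continuous) hh.measurable
  refine (hh.eIntegrable_zero.abs.add (hY.abs.const_mul K)).mono
    (hmeas.comp (hY.1.prodMk measurable_id)) fun ω => ?_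
  calc |h ω (Y ω)| ≤ |h ω 0| + |h ω (Y ω) - h ω 0| := by
        simpa only [add_sub_cancel] using abs_add_le (h ω 0) (h ω (Y ω) - h ω 0)
    _ ≤ |h ω 0| + K * |Y ω| := by
        simpa only [sub_zero] using add_le_add_right (hh.abs_sub_le ω (Y ω) 0) |h ω 0|
    _ ≤ |(|h ω 0| + K * |Y ω|)| := le_abs_self _

end IsLipschitzLoss

theorem EIntegrable.centred (hprob : ∀ P ∈ Ps, IsProbabilityMeasure P) (hX : EIntegrable Ps X)
    (x : ℝ) : EIntegrable Ps fun ω => x + X ω - sublinE Ps X :=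
  ((const hprob x).add hX).sub (const hprob _)

variable {hb : ℝ → Ω → ℝ → ℝ}

theorem abs_Hbar_sub_Hbar_le (hPs : Ps.Nonempty) (hprob : ∀ P ∈ Ps, IsProbabilityMeasure P)
    {t : ℝ} {K : ℝ≥0} (hh : IsLipschitzLoss Ps K (hb t)) (hX : EIntegrable Ps X)
    (hY : EIntegrable Ps Y) (x : ℝ) :
    |Hbar Ps hb t x X - Hbar Ps hb t x Y| ≤ 2 * K * sublinE Ps fun ω => |X ω - Y ω| := by
  set d := sublinE Ps fun ω => |X ω - Y ω|
  have hdiff := (hX.sub hY).abs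
  have hXh := hh.eIntegrable_comp (hX.centred hprob x)
  have hYh := hh.eIntegrable_comp (hY.centred hprob x)
  have hcentred (ω : Ω) :
      |x + X ω - sublinE Ps X - (x + Y ω - sublinE Ps Y)| ≤ |X ω - Y ω| + d := by
    calc _ = |(X ω - Y ω) - (sublinE Ps X - sublinE Ps Y)| := by ring_nf
      _ ≤ |X ω - Y ω| + |sublinE Ps X - sublinE Ps Y| := abs_sub _ _
      _ ≤ |X ω - Y ω| + d := by gcongr; exact abs_sublinE_sub_sublinE_le hPs hX hY
  calc |Hbar Ps hb t x X - Hbar Ps hb t x Y|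
      ≤ sublinE Ps fun ω => |hb t ω (x + X ω - sublinE Ps X) - hb t ω (x + Y ω - sublinE Ps Y)| :=
        abs_sublinE_sub_sublinE_le hPs hXh hYh
    _ ≤ sublinE Ps fun ω => K * (|X ω - Y ω| + d) :=
        sublinE_mono (hXh.sub hYh).abs ((hdiff.add (.const hprob d)).const_mul K) fun ω =>
          (hh.abs_sub_le ω _ _).trans (mul_le_mul_of_nonneg_left (hcentred ω) K.coe_nonneg)
    _ = K * (d + d) := by rw [sublinE_const_mul K.coe_nonneg, sublinE_add_const hPs hprob hdiff]
    _ = 2 * K * d := by ring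

theorem monotone_Hbar_sub_mul (hPs : Ps.Nonempty) (hprob : ∀ P ∈ Ps, IsProbabilityMeasure P)
    {t c : ℝ} {K : ℝ≥0} (hh : IsLipschitzLoss Ps K (hb t))
    (hmono : ∀ ω, Monotone fun y => hb t ω y - c * y) (hX : EIntegrable Ps X) :
    Monotone fun x => Hbar Ps hb t x X - c * x := by
  intro x y hxy
  have hx := hh.eIntegrable_comp (hX.centred hprob x)
  have hy := hh.eIntegrable_comp (hX.centred hprob y)
  have hpointwise (ω : Ω) : hb t ω (x + X ω - sublinE Ps X) + c * (y - x) ≤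
      hb t ω (y + X ω - sublinE Ps X) := by
    have hle : x + X ω - sublinE Ps X ≤ y + X ω - sublinE Ps X := by gcongr
    linarith [hmono ω hle]
  have hHbar : Hbar Ps hb t x X + c * (y - x) ≤ Hbar Ps hb t y X :=
    (sublinE_add_const hPs hprob hx _).ge.trans
      (sublinE_mono (hx.add (.const hprob _)) hy hpointwise)
  linarith

namespace HrAssumption

variable {T cl Ch : ℝ} {l u : ℝ → ℝ}

theorem isLipschitzLoss {K : ℝ≥0} (H : HrAssumption T cl K Ch l u hb)
    (hprob : ∀ P ∈ Ps, IsProbabilityMeasure P) (t : ℝ) : IsLipschitzLoss Ps K (hb t) := by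
  obtain ⟨-, -, -, -, -, -, -, hmeas, -, -, hgrowth, hlip⟩ := H
  refine ⟨hmeas t, fun ω => LipschitzWith.of_dist_le_mul fun y z => (hlip t ω y z).2, ?_⟩
  refine (EIntegrable.const hprob Ch).mono (hmeas t 0) fun ω => ?_
  calc |hb t ω 0| ≤ Ch := by simpa using hgrowth t ω 0
    _ ≤ |Ch| := le_abs_self Ch

theorem monotone_sub_mul {cu : ℝ} (H : HrAssumption T cl cu Ch l u hb) (t : ℝ) (ω : Ω) :
    Monotone fun y => hb t ω y - cl * y := by
  obtain ⟨-, -, -, -, -, -, -, -, -, hmono, -, hlip⟩ := H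
  intro y z hyz
  have hinc := (hlip t ω z y).1
  rw [abs_of_nonneg (sub_nonneg.2 hyz),
    abs_of_nonneg (sub_nonneg.2 ((hmono t ω).monotone hyz))] at hinc
  linarith

end HrAssumption

theorem stmt10_general (hPs : Ps.Nonempty) (hprob : ∀ P ∈ Ps, IsProbabilityMeasure P)
    {hb₁ hb₂ : ℝ → Ω → ℝ → ℝ} {K₁ K₂ : ℝ≥0} {t c₁ c₂ : ℝ} (hc₁ : 0 < c₁) (hc₂ : 0 < c₂)
    (hh₁ : IsLipschitzLoss Ps K₁ (hb₁ t)) (hh₂ : IsLipschitzLoss Ps K₂ (hb₂ t))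
    (hmono₁ : ∀ ω, Monotone fun y => hb₁ t ω y - c₁ * y)
    (hmono₂ : ∀ ω, Monotone fun y => hb₂ t ω y - c₂ * y)
    {X' : Ω → ℝ} (hX : EIntegrable Ps X) (hX' : EIntegrable Ps X') {x x' y p q : ℝ}
    (hx : Hbar Ps hb₁ t x X = p) (hx' : Hbar Ps hb₁ t x' X' = p)
    (hy : Hbar Ps hb₂ t y X' = q) :
    |x - y| ≤ (2 * K₁ / c₁) * sublinE Ps (fun ω => |X ω - X' ω|) +
      (1 / c₂) * (|Hbar Ps hb₁ t x' X' - Hbar Ps hb₂ t x' X'| + |p - q|) := by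
  have hxx' : |x - x'| ≤ (2 * K₁ / c₁) * sublinE Ps fun ω => |X ω - X' ω| := by
    rw [div_mul_eq_mul_div, le_div_iff₀' hc₁]
    calc c₁ * |x - x'| ≤ |Hbar Ps hb₁ t x X - Hbar Ps hb₁ t x' X| :=
          mul_abs_sub_le_abs_sub_of_monotone (monotone_Hbar_sub_mul hPs hprob hh₁ hmono₁ hX) x x'
      _ = |Hbar Ps hb₁ t x' X - Hbar Ps hb₁ t x' X'| := by rw [hx, hx', abs_sub_comm]
      _ ≤ _ := abs_Hbar_sub_Hbar_le hPs hprob hh₁ hX hX' x'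
  have hx'y : |x' - y| ≤
      (1 / c₂) * (|Hbar Ps hb₁ t x' X' - Hbar Ps hb₂ t x' X'| + |p - q|) := by
    rw [one_div_mul_eq_div, le_div_iff₀' hc₂]
    calc c₂ * |x' - y| ≤ |Hbar Ps hb₂ t x' X' - Hbar Ps hb₂ t y X'| :=
          mul_abs_sub_le_abs_sub_of_monotone (monotone_Hbar_sub_mul hPs hprob hh₂ hmono₂ hX') x' y
      _ ≤ |Hbar Ps hb₂ t x' X' - p| + |p - q| := by rw [hy]; exact abs_sub_le _ p q
      _ = _ := by rw [← hx', abs_sub_comm]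
  calc |x - y| ≤ |x - x'| + |x' - y| := abs_sub_le x x' y
    _ ≤ _ := add_le_add hxx' hx'y

end

/-- comparison of the operators `L¹, L²` (resp. `U¹, U²`) associated with two
data sets `(hb¹, l¹, u¹)`, `(hb², l², u²)` satisfying (H_r) with the same constants. -/
theorem stmt10 {Ω : Type*} [MeasurableSpace Ω] (T cl cu Ch : ℝ) (hT : 0 < T)
    (Ps : Set (Measure Ω)) (hPs : Ps.Nonempty) (hprob : ∀ P ∈ Ps, IsProbabilityMeasure P)
    (l1 u1 l2 u2 : ℝ → ℝ) (hb1 hb2 : ℝ → Ω → ℝ → ℝ)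
    (hHr1 : HrAssumption T cl cu Ch l1 u1 hb1) (hHr2 : HrAssumption T cl cu Ch l2 u2 hb2)
    (L1 U1 L2 U2 : ℝ → (Ω → ℝ) → ℝ)
    (hL1 : ∀ t ∈ Icc (0:ℝ) T, ∀ X : Ω → ℝ, EIntegrable Ps X → Hbar Ps hb1 t (L1 t X) X = l1 t)
    (hU1 : ∀ t ∈ Icc (0:ℝ) T, ∀ X : Ω → ℝ, EIntegrable Ps X → Hbar Ps hb1 t (U1 t X) X = u1 t)
    (hL2 : ∀ t ∈ Icc (0:ℝ) T, ∀ X : Ω → ℝ, EIntegrable Ps X → Hbar Ps hb2 t (L2 t X) X = l2 t)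
    (hU2 : ∀ t ∈ Icc (0:ℝ) T, ∀ X : Ω → ℝ, EIntegrable Ps X → Hbar Ps hb2 t (U2 t X) X = u2 t)
    (s : ℝ) (hs : s ∈ Icc (0:ℝ) T)
    (X X' : Ω → ℝ) (hX : EIntegrable Ps X) (hX' : EIntegrable Ps X') :
    |L1 s X - L2 s X'| ≤
      (2 * cu / cl) * sublinE Ps (fun ω => |X ω - X' ω|) +
        (1 / cl) * (|Hbar Ps hb1 s (L1 s X') X' - Hbar Ps hb2 s (L1 s X') X'| +
          |l1 s - l2 s|) ∧
    |U1 s X - U2 s X'| ≤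
      (2 * cu / cl) * sublinE Ps (fun ω => |X ω - X' ω|) +
        (1 / cl) * (|Hbar Ps hb1 s (U1 s X') X' - Hbar Ps hb2 s (U1 s X') X'| +
          |u1 s - u2 s|) := by
  lift cu to NNReal using hHr1.1.le.trans hHr1.2.1
  have stability {p q x x' y : ℝ} := stmt10_general (x := x) (x' := x') (y := y) (p := p) (q := q)
    hPs hprob hHr1.1 hHr2.1 (hHr1.isLipschitzLoss hprob s) (hHr2.isLipschitzLoss hprob s)
    (hHr1.monotone_sub_mul s) (hHr2.monotone_sub_mul s) hX hX'
  exact ⟨stability (hL1 s hs X hX) (hL1 s hs X' hX') (hL2 s hs X' hX'),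
    stability (hU1 s hs X hX) (hU1 s hs X' hX') (hU2 s hs X' hX')⟩
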